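/- arXiv:math/0502501 — 2 statements merged into one kernel-verified Lean document; each statement's English description precedes it below -/
import Mathlib

section
/- Let B be a set of mutually orthogonal positive roots of Φ, let β, γ ∈ B, and let j be a node with ⟨α_j, β⟩ = −1 and ⟨α_j, γ⟩ = 1 and ht(γ) = ht(β) + 2. Then there is no node i such that i ∼ j and ⟨α_i, δ⟩ = 0 for every δ ∈ B. -/
/-!
Subtracting `α j`, `α i` and `β` successively from `γ` never leaves the root system: at each step the
inner product of the root at hand with the root subtracted is `1`, so the difference is the image
under a reflection (`SLRS.sub_mem`). Indeed `⟪γ, α j⟫ = 1`, then `⟪γ - α j, α i⟫ = 0 + 1`, and finally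
`⟪γ - α j - α i, β⟫ = 0 + 1 - 0`. The resulting root `γ - α j - α i - β` has height
`ht γ - ht β - 2 = 0`, whereas no root has height zero (`SLRS.ht_ne_zero`).
-/

open scoped InnerProductSpace

/-- A finite crystallographic simply laced root system `Φ` in a real inner
product space, normalized so that `⟪β, β⟫ = 2` for all roots, together with a
fixed base `α 1, …, α n` (the nodes of the diagram `M`), the corresponding set
`Pos` of positive roots, and the height linear functional `ht`. -/
structure SLRS (V : Type) [NormedAddCommGroup V] [InnerProductSpace ℝ V] where
  /-- the number of nodes of the diagram -/
  n : ℕ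
  /-- the set of roots -/
  Φ : Set V
  /-- the set of positive roots -/
  Pos : Set V
  /-- the simple roots -/
  α : Fin n → V
  /-- the height functional: heights are sums of coefficients on simple roots -/
  ht : V →ₗ[ℝ] ℝ
  finite : Φ.Finite
  pos_subset : Pos ⊆ Φ
  mem_pos_or_neg : ∀ β ∈ Φ, β ∈ Pos ∨ -β ∈ Pos
  not_pos_and_neg : ∀ β ∈ Pos, -β ∉ Pos
  alpha_pos : ∀ i, α i ∈ Pos
  norm_two : ∀ β ∈ Φ, ⟪β, β⟫_ℝ = 2
  inner_int : ∀ β ∈ Φ, ∀ γ ∈ Φ, ∃ z : ℤ, ⟪β, γ⟫_ℝ = (z : ℝ)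
  reflect_mem : ∀ β ∈ Φ, ∀ γ ∈ Φ, β - ⟪β, γ⟫_ℝ • γ ∈ Φ
  reduced : ∀ β ∈ Φ, ∀ t : ℝ, t • β ∈ Φ → t = 1 ∨ t = -1
  pos_coeff : ∀ β ∈ Pos, ∃ a : Fin n → ℕ, β = ∑ i, (a i : ℝ) • α i
  ht_alpha : ∀ i, ht (α i) = 1

namespace SLRS

variable {V : Type} [NormedAddCommGroup V] [InnerProductSpace ℝ V] (S : SLRS V)

/-- Adjacency of two nodes of the diagram: `i ∼ j` iff `⟪α i, α j⟫ = -1`. -/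
def adj (i j : Fin S.n) : Prop := ⟪S.α i, S.α j⟫_ℝ = -1

/-- The reflection along a root `δ` (normalized so that `⟪δ, δ⟫ = 2`). -/
def reflRoot (δ : V) : V → V := fun v => v - ⟪v, δ⟫_ℝ • δ

/-- The fundamental reflection `r i`. -/
def refl (i : Fin S.n) : V → V := reflRoot (S.α i)

/-- A set of mutually orthogonal positive roots. -/
def IsOrthoSet (B : Set V) : Prop :=
  B ⊆ S.Pos ∧ ∀ β ∈ B, ∀ γ ∈ B, β ≠ γ → ⟪β, γ⟫_ℝ = 0

/-- The action of a map `w` on a set `B` of positive roots: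
`w·B = Φ⁺ ∩ {± w β : β ∈ B}`. -/
def mapSet (w : V → V) (B : Set V) : Set V :=
  {x ∈ S.Pos | ∃ β ∈ B, w β = x ∨ w β = -x}

/-- The action of the fundamental reflection `r i` on a set of positive roots. -/
def rAct (i : Fin S.n) (B : Set V) : Set V := S.mapSet (S.refl i) B

/-- The action of the reflection along a root `δ` on a set of positive roots. -/
def reflAct (δ : V) (B : Set V) : Set V := S.mapSet (reflRoot δ) B

/-- The `W`-orbit of `B`, `W` being generated by the fundamental reflections. -/
def orbitOf (B : Set V) : Set (Set V) :=
  {C | Relation.ReflTransGen (fun X Y => ∃ i, Y = S.rAct i X) B C}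

/-- `𝓑` is a `W`-orbit of sets of mutually orthogonal positive roots. -/
def IsOrbit (𝓑 : Set (Set V)) : Prop :=
  ∃ B, S.IsOrthoSet B ∧ 𝓑 = S.orbitOf B

/-- Admissibility of a `W`-orbit of sets of mutually orthogonal positive roots. -/
def Admissible (𝓑 : Set (Set V)) : Prop :=
  S.IsOrbit 𝓑 ∧ ∀ B ∈ 𝓑, ∀ i j : Fin S.n, i ≠ j → ¬ S.adj i j →
    (∃ γ, γ ∈ B ∧ γ - S.α i + S.α j ∈ B) → S.rAct i B = S.rAct j B

/-- The height order: `B < C` iff `B ≠ C` and the minimal height of an element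
of `B \ C` is smaller than the minimal height of an element of `C \ B`. -/
def lt (B C : Set V) : Prop :=
  B ≠ C ∧ sInf (⇑S.ht '' (B \ C)) < sInf (⇑S.ht '' (C \ B))

/-- The map `V → V` determined by the word `l = [i₁, …, iₛ]`,
namely `r i₁ ∘ r i₂ ∘ ⋯ ∘ r iₛ`. -/
def wordMap (l : List (Fin S.n)) : V → V := l.foldr (fun i f => S.refl i ∘ f) id

/-- A map belongs to the Weyl group `W` iff it is realized by a word in the
fundamental reflections. -/
def InW (w : V → V) : Prop := ∃ l : List (Fin S.n), S.wordMap l = w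

/-- The Coxeter length of an element of `W`: the minimal length of a word in
the fundamental reflections representing it. -/
noncomputable def len (w : V → V) : ℕ :=
  sInf {k | ∃ l : List (Fin S.n), l.length = k ∧ S.wordMap l = w}

/-- The action of `w ∈ W` on a set of positive roots. -/
def wAct (w : V → V) (B : Set V) : Set V := S.mapSet w B

/-- `r i₁ · (r i₂ · ⋯ (r iₛ · B))` for the word `l = [i₁, …, iₛ]`. -/
def suffixAct (l : List (Fin S.n)) (B : Set V) : Set V := l.foldr S.rAct B

/-- The chain `B > r iₛ · B > r iₛ₋₁ r iₛ · B > ⋯ > r i₁ ⋯ r iₛ · B` obtained by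
successively applying the letters of the word `l = [i₁, …, iₛ]` to `B` is
strictly descending at every step. -/
def DescChain (l : List (Fin S.n)) (B : Set V) : Prop :=
  ∀ k < l.length, S.lt (S.suffixAct (l.drop k) B) (S.suffixAct (l.drop (k + 1)) B)

end SLRS

open SLRS

variable {V : Type} [NormedAddCommGroup V] [InnerProductSpace ℝ V]

/-- A root is, up to sign, a combination of simple roots with natural coefficients, so the vanishing
of its height would force it to be the zero vector. -/
theorem SLRS.ht_ne_zero (S : SLRS V) {β : V} (hβ : β ∈ S.Φ) : S.ht β ≠ 0 := by
  have key : ∀ δ ∈ S.Pos, S.ht δ ≠ 0 := by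
    intro δ hδ h0
    obtain ⟨a, ha⟩ := S.pos_coeff δ hδ
    have hsum : ∑ i, (a i : ℝ) = 0 := by
      rw [ha] at h0
      simpa [S.ht_alpha] using h0
    have hz := (Finset.sum_eq_zero_iff_of_nonneg (fun i _ => Nat.cast_nonneg (a i))).1 hsum
    have hδ0 : δ = 0 := by
      rw [ha]
      exact Finset.sum_eq_zero fun i hi => by rw [hz i hi, zero_smul]
    have h2 := S.norm_two δ (S.pos_subset hδ)
    rw [hδ0, inner_zero_left] at h2
    norm_num at h2
  rcases S.mem_pos_or_neg β hβ with h | h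
  · exact key β h
  · simpa using key _ h

theorem SLRS.sub_mem (S : SLRS V) {β γ : V} (hβ : β ∈ S.Φ) (hγ : γ ∈ S.Φ)
    (h : ⟪β, γ⟫_ℝ = 1) : β - γ ∈ S.Φ := by
  simpa [h] using S.reflect_mem β hβ γ hγ

/-- Proposition 2.1(ii): for a set `B` of mutually orthogonal
positive roots, `β, γ ∈ B` and a node `j` with `⟪α j, β⟫ = -1`, `⟪α j, γ⟫ = 1`
and `ht γ = ht β + 2`, there is no node `i` adjacent to `j` with `α i`
orthogonal to every element of `B`. -/
theorem no_adjacent_perp_node (S : SLRS V) (B : Set V) (hB : S.IsOrthoSet B)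
    (β γ : V) (hβ : β ∈ B) (hγ : γ ∈ B) (j : Fin S.n)
    (h1 : ⟪S.α j, β⟫_ℝ = -1) (h2 : ⟪S.α j, γ⟫_ℝ = 1)
    (h3 : S.ht γ = S.ht β + 2) :
    ¬ ∃ i : Fin S.n, S.adj i j ∧ ∀ δ ∈ B, ⟪S.α i, δ⟫_ℝ = 0 := by
  rintro ⟨i, hij, hi⟩
  have hβΦ := S.pos_subset (hB.1 hβ)
  have hγΦ := S.pos_subset (hB.1 hγ)
  have hα : ∀ k, S.α k ∈ S.Φ := fun k => S.pos_subset (S.alpha_pos k)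
  have hne : γ ≠ β := by
    rintro rfl
    linarith
  have hγβ := hB.2 γ hγ β hβ hne
  have hγi : ⟪γ, S.α i⟫_ℝ = 0 := by rw [real_inner_comm]; exact hi γ hγ
  have hji : ⟪S.α j, S.α i⟫_ℝ = -1 := by rw [real_inner_comm]; exact hij
  have m1 : γ - S.α j ∈ S.Φ := S.sub_mem hγΦ (hα j) (by rw [real_inner_comm]; exact h2)
  have m2 : γ - S.α j - S.α i ∈ S.Φ := S.sub_mem m1 (hα i) (by
    rw [inner_sub_left, hγi, hji]; norm_num)
  have m3 : γ - S.α j - S.α i - β ∈ S.Φ := S.sub_mem m2 hβΦ (by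
    rw [inner_sub_left, inner_sub_left, hγβ, h1, hi β hβ]; norm_num)
  apply S.ht_ne_zero m3
  rw [map_sub, map_sub, map_sub, S.ht_alpha, S.ht_alpha, h3]
  ring
end

section
/- Let 𝓑 be an admissible W-orbit of sets of mutually orthogonal positive roots, B ∈ 𝓑, and let i, j be nodes with i ∼ j and ⟨α_i, β⟩ = 0 for all β ∈ B. If r_j·B < B, then r_i r_j·B < r_j·B; and if r_j·B > B, then r_i r_j·B > r_j·B. -/
/-!
Since `α i` is orthogonal to `B` and `⟪α i, α j⟫ = -1`, neither `α j` nor `-α j` lies in `B`, so every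
`β ∈ B` has `⟪β, α j⟫ = ε ∈ {-1, 0, 1}`, and then `r j β = β - ε α j` and
`r i (r j β) = β - ε (α j + α i)`. Both are positive by looking at heights, so no signs occur.
The elements with `ε = 0` are fixed throughout, and those with `ε ≠ 0` make up exactly the
differences between the consecutive sets `B`, `r j · B`, `r i r j · B`
(`key_differences`). Hence the two order relations compare heights of the `p` with `ε = 1`, which
drop by `1` at each step, and of the `q` with `ε = -1`, which rise by `1` at each step.

If `r j · B < B`, the minimal height is attained by some `p - α j`, and `p - α j - α i` wins in the
second step. If `B < r j · B`, the minimum is attained by some `q` with `ht q < ht p - 1` for every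
`p`, whereas the second step needs `ht q + 1 < ht p - 2`. The two intermediate values
`ht p = ht q + 2` and `ht p = ht q + 3` cannot occur: as `p ⟂ q`, the vectors `q - p + α j + α i`
and `q - p + 2 α j + α i` are roots, and no root has height `0`. The orthogonality
`p ⟂ q` holds because the action of `W` preserves orthogonality of sets (`isOrthoSet_rAct`).
-/

open scoped InnerProductSpace

namespace SLRS

variable {V : Type} [NormedAddCommGroup V] [InnerProductSpace ℝ V] (S : SLRS V)

/-! ### Heights and positivity of roots -/

lemma alpha_mem (i : Fin S.n) : S.α i ∈ S.Φ := S.pos_subset (S.alpha_pos i)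

/-- Positive roots have positive integral height. -/
lemma ht_pos {β : V} (h : β ∈ S.Pos) : ∃ m : ℤ, S.ht β = m ∧ 1 ≤ m := by
  obtain ⟨a, ha⟩ := S.pos_coeff β h
  refine ⟨∑ i, (a i : ℤ), ?_, ?_⟩
  · rw [ha]
    simp [S.ht_alpha]
  · by_contra hlt
    have h0 : ∑ i, (a i : ℤ) = 0 := by
      have : 0 ≤ ∑ i, (a i : ℤ) := Finset.sum_nonneg fun _ _ => by positivity
      lia
    have hz : ∀ i, a i = 0 := fun i => by
      have := (Finset.sum_eq_zero_iff_of_nonneg (fun i _ => by positivity)).1 h0 i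
        (Finset.mem_univ i)
      exact_mod_cast this
    have hβ : β = 0 := by rw [ha]; simp [hz]
    have := S.norm_two β (S.pos_subset h)
    simp [hβ] at this

lemma ht_ne_zero_s7 {β : V} (h : β ∈ S.Φ) : S.ht β ≠ 0 := by
  rcases S.mem_pos_or_neg β h with h | h
  · obtain ⟨m, hm, h1⟩ := S.ht_pos h
    rw [hm]
    exact_mod_cast (by lia : m ≠ 0)
  · obtain ⟨m, hm, h1⟩ := S.ht_pos h
    rw [map_neg] at hm
    intro h0
    rw [h0, neg_zero] at hm
    have : (0 : ℤ) = m := by exact_mod_cast hm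
    lia

/-- A root of nonnegative height is positive. -/
lemma pos_of_ht {β : V} (h : β ∈ S.Φ) (h0 : 0 ≤ S.ht β) : β ∈ S.Pos := by
  rcases S.mem_pos_or_neg β h with h | h
  · exact h
  · obtain ⟨m, hm, h1⟩ := S.ht_pos h
    rw [map_neg] at hm
    have : (1 : ℝ) ≤ m := by exact_mod_cast h1
    linarith

lemma refl_mem (k : Fin S.n) {β : V} (h : β ∈ S.Φ) : S.refl k β ∈ S.Φ :=
  S.reflect_mem β h _ (S.alpha_mem k)

/-- A root `β ≠ ± α k` pairs with `α k` to `1`, `0` or `-1`, by positive definiteness. -/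
lemma inner_cases (k : Fin S.n) {β : V} (h : β ∈ S.Φ) (h1 : β ≠ S.α k) (h2 : β ≠ -S.α k) :
    ⟪β, S.α k⟫_ℝ = 1 ∨ ⟪β, S.α k⟫_ℝ = 0 ∨ ⟪β, S.α k⟫_ℝ = -1 := by
  obtain ⟨z, hz⟩ := S.inner_int β h _ (S.alpha_mem k)
  have n1 := S.norm_two β h
  have n2 := S.norm_two _ (S.alpha_mem k)
  have p1 : 0 < ⟪β - S.α k, β - S.α k⟫_ℝ := real_inner_self_pos.2 (sub_ne_zero.2 h1)
  have p2 : 0 < ⟪β + S.α k, β + S.α k⟫_ℝ :=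
    real_inner_self_pos.2 (fun h => h2 (eq_neg_of_add_eq_zero_left h))
  rw [real_inner_sub_sub_self, n1, n2, hz] at p1
  rw [real_inner_add_add_self, n1, n2, hz] at p2
  have q1 : z < 2 := by exact_mod_cast (by linarith : (z : ℝ) < 2)
  have q2 : -2 < z := by exact_mod_cast (by linarith : (-2 : ℝ) < z)
  rw [hz]
  have : z = 1 ∨ z = 0 ∨ z = -1 := by lia
  rcases this with rfl | rfl | rfl <;> simp

/-! ### The action on sets of orthogonal roots and the order -/

/-- When `r k` keeps every element of `X` positive, `r k · X` is the image of `X`. -/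
lemma rAct_eq_image (k : Fin S.n) {X : Set V} (h : ∀ β ∈ X, S.refl k β ∈ S.Pos) :
    S.rAct k X = S.refl k '' X := by
  ext x
  constructor
  · rintro ⟨hx, β, hβ, h1 | h1⟩
    · exact ⟨β, hβ, h1⟩
    · exact absurd (h1 ▸ h β hβ) (S.not_pos_and_neg x hx)
  · rintro ⟨β, hβ, rfl⟩
    exact ⟨h β hβ, β, hβ, Or.inl rfl⟩

lemma inner_refl_refl (k : Fin S.n) (v w : V) : ⟪S.refl k v, S.refl k w⟫_ℝ = ⟪v, w⟫_ℝ := by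
  have n2 := S.norm_two _ (S.alpha_mem k)
  simp only [refl, reflRoot, inner_sub_left, inner_sub_right, inner_smul_left, inner_smul_right,
    n2, real_inner_comm (S.α k) w]
  simp
  ring

lemma isOrthoSet_rAct (k : Fin S.n) {X : Set V} (h : S.IsOrthoSet X) :
    S.IsOrthoSet (S.rAct k X) := by
  refine ⟨fun x hx => hx.1, ?_⟩
  rintro x ⟨hx, β, hβ, h1⟩ y ⟨hy, γ, hγ, h2⟩ hxy
  have hne : β ≠ γ := by
    rintro rfl
    rcases h1 with h1 | h1 <;> rcases h2 with h2 | h2 <;> rw [h1] at h2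
    · exact hxy h2
    · exact S.not_pos_and_neg y hy (h2 ▸ hx)
    · exact S.not_pos_and_neg x hx (h2 ▸ hy)
    · exact hxy (neg_injective h2)
  have h0 := h.2 β hβ γ hγ hne
  rw [← S.inner_refl_refl k] at h0
  rcases h1 with h1 | h1 <;> rcases h2 with h2 | h2 <;> simpa [h1, h2] using h0

lemma isOrthoSet_of_mem_orbit {𝓑 : Set (Set V)} (h𝓑 : S.IsOrbit 𝓑) {B : Set V} (hB : B ∈ 𝓑) :
    S.IsOrthoSet B := by
  obtain ⟨B₀, h0, rfl⟩ := h𝓑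
  change Relation.ReflTransGen _ _ _ at hB
  induction hB with
  | refl => exact h0
  | tail _ hs ih =>
    obtain ⟨k, rfl⟩ := hs
    exact S.isOrthoSet_rAct k ih

/-- The order relation without infima; the nonemptiness hypotheses keep the infima meaningful. -/
lemma lt_iff {X Y : Set V} (hX : X ⊆ S.Pos) (hY : Y ⊆ S.Pos)
    (h1 : (X \ Y).Nonempty) (h2 : (Y \ X).Nonempty) :
    S.lt X Y ↔ ∃ x ∈ X \ Y, ∀ y ∈ Y \ X, S.ht x < S.ht y := by
  have f1 : (S.ht '' (X \ Y)).Finite :=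
    ((S.finite.subset (hX.trans S.pos_subset)).subset Set.sdiff_subset).image _
  have f2 : (S.ht '' (Y \ X)).Finite :=
    ((S.finite.subset (hY.trans S.pos_subset)).subset Set.sdiff_subset).image _
  constructor
  · rintro ⟨-, hlt⟩
    obtain ⟨x, hx, hxe⟩ := (h1.image S.ht).csInf_mem f1
    refine ⟨x, hx, fun y hy => ?_⟩
    rw [hxe]
    exact hlt.trans_le (csInf_le f2.bddBelow ⟨y, hy, rfl⟩)
  · rintro ⟨x, hx, hxy⟩
    refine ⟨fun h => hx.2 (h ▸ hx.1), ?_⟩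
    obtain ⟨y, hy, hye⟩ := (h2.image S.ht).csInf_mem f2
    rw [← hye]
    exact (csInf_le f1.bddBelow ⟨x, hx, rfl⟩).trans_lt (hxy y hy)

/-! ### Two successive reflections -/

/-- The set differences between `B`, `r j · B` and `r i r j · B` consist of the translates of the
elements of `B` that are not orthogonal to `α j`. -/
lemma key_differences {B : Set V} (hB : B ⊆ S.Pos) {i j : Fin S.n} (hij : S.adj i j)
    (hperp : ∀ β ∈ B, ⟪S.α i, β⟫_ℝ = 0) :
    let M : Set V := {β ∈ B | ⟪β, S.α j⟫_ℝ = 1 ∨ ⟪β, S.α j⟫_ℝ = -1}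
    let f : V → V := fun β => β - ⟪β, S.α j⟫_ℝ • S.α j
    let g : V → V := fun β => β - ⟪β, S.α j⟫_ℝ • (S.α j + S.α i)
    B \ S.rAct j B = M ∧ S.rAct j B \ B = f '' M ∧
      S.rAct j B \ S.rAct i (S.rAct j B) = f '' M ∧
      S.rAct i (S.rAct j B) \ S.rAct j B = g '' M := by
  intro M f g
  have nj := S.norm_two _ (S.alpha_mem j)
  have ni := S.norm_two _ (S.alpha_mem i)
  have hij' : ⟪S.α i, S.α j⟫_ℝ = -1 := hij
  have hji : ⟪S.α j, S.α i⟫_ℝ = -1 := by rw [real_inner_comm]; exact hij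
  have hp : ∀ β ∈ B, ⟪β, S.α i⟫_ℝ = 0 := fun β hβ => by rw [real_inner_comm]; exact hperp β hβ
  have hc : ∀ β ∈ B, ⟪β, S.α j⟫_ℝ = 1 ∨ ⟪β, S.α j⟫_ℝ = 0 ∨ ⟪β, S.α j⟫_ℝ = -1 := by
    intro β hβ
    refine S.inner_cases j (S.pos_subset (hB hβ)) ?_ ?_ <;> rintro rfl
    · linarith [hp _ hβ]
    · have := hp _ hβ
      rw [inner_neg_left] at this
      linarith
  have hfi : ∀ β ∈ B, ⟪f β, S.α i⟫_ℝ = ⟪β, S.α j⟫_ℝ := fun β hβ => by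
    simp [f, inner_sub_left, inner_smul_left, hji, hp β hβ]
  have hgi : ∀ β ∈ B, S.refl i (f β) = g β := fun β hβ => by
    change f β - ⟪f β, S.α i⟫_ℝ • S.α i = _
    rw [hfi β hβ]
    simp only [f, g]
    module
  have hgα : ∀ β ∈ B, ⟪g β, S.α i⟫_ℝ = -⟪β, S.α j⟫_ℝ := fun β hβ => by
    simp only [g, inner_sub_left, inner_smul_left, inner_add_left, hji, hp β hβ, ni]
    simp
    ring
  have hfpos : ∀ β ∈ B, f β ∈ S.Pos := by
    intro β hβ
    refine S.pos_of_ht (S.refl_mem j (S.pos_subset (hB hβ))) ?_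
    obtain ⟨m, hm, h1⟩ := S.ht_pos (hB hβ)
    have h1' : (1 : ℝ) ≤ m := by exact_mod_cast h1
    simp only [f, map_sub, map_smul, S.ht_alpha, hm]
    rcases hc β hβ with h | h | h <;> rw [h] <;> simp <;> linarith
  have hgpos : ∀ β ∈ B, g β ∈ S.Pos := by
    intro β hβ
    rw [← hgi β hβ]
    refine S.pos_of_ht (S.refl_mem i (S.pos_subset (hfpos β hβ))) ?_
    obtain ⟨m, hm, h1⟩ := S.ht_pos (hfpos β hβ)
    have h1' : (1 : ℝ) ≤ m := by exact_mod_cast h1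
    simp only [refl, reflRoot, map_sub, map_smul, S.ht_alpha, hm]
    rw [hfi β hβ]
    rcases hc β hβ with h | h | h <;> rw [h] <;> simp <;> linarith
  have hC : S.rAct j B = f '' B := S.rAct_eq_image j hfpos
  have hD : S.rAct i (S.rAct j B) = g '' B := by
    rw [hC, S.rAct_eq_image i]
    · rw [Set.image_image]
      exact Set.image_congr hgi
    · rintro _ ⟨β, hβ, rfl⟩
      rw [hgi β hβ]
      exact hgpos β hβ
  have hM : ∀ β ∈ B, ⟪β, S.α j⟫_ℝ ≠ 0 → β ∈ M := fun β hβ h => ⟨hβ, by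
    rcases hc β hβ with h' | h' | h'
    · exact Or.inl h'
    · exact absurd h' h
    · exact Or.inr h'⟩
  have hM0 : ∀ β ∈ M, ⟪β, S.α j⟫_ℝ ≠ 0 := by
    rintro β ⟨-, h | h⟩ <;> rw [h] <;> norm_num
  have hf0 : ∀ β, ⟪β, S.α j⟫_ℝ = 0 → f β = β := fun β h => by simp [f, h]
  have hg0 : ∀ β, ⟪β, S.α j⟫_ℝ = 0 → g β = β := fun β h => by simp [g, h]
  -- If `f β = g γ` with nonzero coefficients, then `β - γ` is a multiple of `α i + 2 α j`,
  -- and pairing this with `α j` gives a contradiction.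
  have hfg : ∀ β ∈ M, ∀ γ ∈ B, f β ≠ g γ := by
    intro β hβ γ hγ he
    have e1 : ⟪β, S.α j⟫_ℝ = -⟪γ, S.α j⟫_ℝ := by rw [← hfi β hβ.1, he, hgα γ hγ]
    have e2 : β = γ - ⟪γ, S.α j⟫_ℝ • (S.α i + (2 : ℝ) • S.α j) := by
      have : β = g γ + ⟪β, S.α j⟫_ℝ • S.α j := by rw [← he]; simp [f]
      rw [this, e1]
      simp only [g]
      module
    have e3 := hp β hβ.1
    have e4 := hM0 β hβ
    rw [e1] at e4
    have e5 : ⟪β, S.α j⟫_ℝ = ⟪γ, S.α j⟫_ℝ - ⟪γ, S.α j⟫_ℝ * (-1 + 2 * 2) := by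
      conv_lhs => rw [e2]
      simp only [inner_sub_left, inner_smul_left, inner_add_left, hij', nj]
      simp
    exact e4 (by linarith)
  rw [hD, hC]
  refine ⟨?_, ?_, ?_, ?_⟩
  · ext x
    constructor
    · rintro ⟨hx, hn⟩
      exact hM x hx fun h => hn ⟨x, hx, hf0 x h⟩
    · rintro hx
      refine ⟨hx.1, ?_⟩
      rintro ⟨γ, hγ, rfl⟩
      have h1 := hp _ hx.1
      rw [hfi γ hγ] at h1
      exact hM0 _ hx (by rw [hf0 γ h1, h1])
  · ext x
    constructor
    · rintro ⟨⟨β, hβ, rfl⟩, hn⟩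
      exact ⟨β, hM β hβ fun h => hn (by rwa [hf0 β h]), rfl⟩
    · rintro ⟨β, hβ, rfl⟩
      exact ⟨⟨β, hβ.1, rfl⟩, fun h => hM0 β hβ (by rw [← hfi β hβ.1, hp _ h])⟩
  · ext x
    constructor
    · rintro ⟨⟨β, hβ, rfl⟩, hn⟩
      exact ⟨β, hM β hβ fun h => hn ⟨β, hβ, by rw [hf0 β h, hg0 β h]⟩, rfl⟩
    · rintro ⟨β, hβ, rfl⟩
      exact ⟨⟨β, hβ.1, rfl⟩, fun ⟨γ, hγ, he⟩ => hfg β hβ γ hγ he.symm⟩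
  · ext x
    constructor
    · rintro ⟨⟨β, hβ, rfl⟩, hn⟩
      exact ⟨β, hM β hβ fun h => hn ⟨β, hβ, by rw [hf0 β h, hg0 β h]⟩, rfl⟩
    · rintro ⟨β, hβ, rfl⟩
      refine ⟨⟨β, hβ.1, rfl⟩, ?_⟩
      rintro ⟨γ, hγ, he⟩
      refine hfg γ (hM γ hγ fun h => hM0 β hβ ?_) β hβ.1 he
      have := hfi γ hγ
      rw [he, hgα β hβ.1, h] at this
      linarith

/-- The two heights just above `ht q + 1` are impossible for `p`, because `q - p + α j + α i` and
`q - p + 2 α j + α i` are roots. -/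
lemma ht_gap {i j : Fin S.n} (hij : S.adj i j) {p q : V} (hpΦ : p ∈ S.Φ) (hqΦ : q ∈ S.Φ)
    (hp : ⟪p, S.α i⟫_ℝ = 0) (hq : ⟪q, S.α i⟫_ℝ = 0) (hqp : ⟪q, p⟫_ℝ = 0)
    (hp1 : ⟪p, S.α j⟫_ℝ = 1) (hq1 : ⟪q, S.α j⟫_ℝ = -1) :
    S.ht p ≠ S.ht q + 2 ∧ S.ht p ≠ S.ht q + 3 := by
  have nj := S.norm_two _ (S.alpha_mem j)
  have hij' : ⟪S.α i, S.α j⟫_ℝ = -1 := hij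
  have hji : ⟪S.α j, S.α i⟫_ℝ = -1 := by rw [real_inner_comm]; exact hij
  have hjp : ⟪S.α j, p⟫_ℝ = 1 := by rw [real_inner_comm]; exact hp1
  have r1 : q + S.α j ∈ S.Φ := by
    have := S.reflect_mem q hqΦ _ (S.alpha_mem j)
    rw [hq1] at this
    convert this using 1
    module
  have r2 : q + S.α j - p ∈ S.Φ := by
    have := S.reflect_mem _ r1 p hpΦ
    rw [show ⟪q + S.α j, p⟫_ℝ = 1 by rw [inner_add_left, hqp, hjp]; norm_num] at this
    simpa using this
  have r3 : q + S.α j - p + S.α i ∈ S.Φ := by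
    have := S.reflect_mem _ r2 _ (S.alpha_mem i)
    rw [show ⟪q + S.α j - p, S.α i⟫_ℝ = -1 by
      rw [inner_sub_left, inner_add_left, hq, hji, hp]; norm_num] at this
    convert this using 1
    module
  have r4 : q + S.α j - p + S.α i + S.α j ∈ S.Φ := by
    have := S.reflect_mem _ r3 _ (S.alpha_mem j)
    rw [show ⟪q + S.α j - p + S.α i, S.α j⟫_ℝ = -1 by
      rw [inner_add_left, inner_sub_left, inner_add_left, hq1, nj, hp1, hij']; norm_num] at this
    convert this using 1
    module
  have h3 := S.ht_ne_zero_s7 r3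
  have h4 := S.ht_ne_zero_s7 r4
  simp only [map_add, map_sub, S.ht_alpha] at h3 h4
  exact ⟨fun h => h3 (by linarith), fun h => h4 (by linarith)⟩

end SLRS

open SLRS

variable {V : Type} [NormedAddCommGroup V] [InnerProductSpace ℝ V]

/-- Proposition 3.1(ii): for `𝓑` admissible, `B ∈ 𝓑`, nodes
`i ∼ j` with `α i` orthogonal to all of `B`: if `r j · B < B` then
`r i r j · B < r j · B`, and if `r j · B > B` then `r i r j · B > r j · B`. -/
theorem lower_raise_adjacent_perp (S : SLRS V) (𝓑 : Set (Set V))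
    (hadm : S.Admissible 𝓑) (B : Set V) (hB : B ∈ 𝓑) (i j : Fin S.n)
    (hij : S.adj i j) (hperp : ∀ β ∈ B, ⟪S.α i, β⟫_ℝ = 0) :
    (S.lt (S.rAct j B) B → S.lt (S.rAct i (S.rAct j B)) (S.rAct j B)) ∧
    (S.lt B (S.rAct j B) → S.lt (S.rAct j B) (S.rAct i (S.rAct j B))) := by
  have hO := S.isOrthoSet_of_mem_orbit hadm.1 hB
  have hBP := hO.1
  have hCP : S.rAct j B ⊆ S.Pos := fun _ h => h.1
  have hDP : S.rAct i (S.rAct j B) ⊆ S.Pos := fun _ h => h.1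
  obtain ⟨k1, k2, k3, k4⟩ := S.key_differences hBP hij hperp
  by_cases hne : ({β ∈ B | ⟪β, S.α j⟫_ℝ = 1 ∨ ⟪β, S.α j⟫_ℝ = -1} : Set V).Nonempty
  · rw [S.lt_iff hCP hBP (by rw [k2]; exact hne.image _) (by rw [k1]; exact hne),
      S.lt_iff hDP hCP (by rw [k4]; exact hne.image _) (by rw [k3]; exact hne.image _),
      S.lt_iff hBP hCP (by rw [k1]; exact hne) (by rw [k2]; exact hne.image _),
      S.lt_iff hCP hDP (by rw [k3]; exact hne.image _) (by rw [k4]; exact hne.image _),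
      k1, k2, k3, k4]
    simp only [Set.exists_mem_image, Set.forall_mem_image, map_sub, map_smul, map_add,
      S.ht_alpha, smul_eq_mul]
    constructor
    · rintro ⟨p, hp, h⟩
      refine ⟨p, hp, fun y hy => ?_⟩
      have h1 := h p hp
      have h2 := h y hy
      rcases hp.2 with e | e <;> rcases hy.2 with e' | e' <;> rw [e] at h1 h2 ⊢ <;> rw [e'] <;>
        linarith
    · rintro ⟨q, hq, h⟩
      refine ⟨q, hq, fun y hy => ?_⟩
      have h1 := h hq
      have h2 := h hy
      obtain e | e := hq.2
      · rw [e] at h1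
        linarith
      rcases hy.2 with e' | e' <;> rw [e'] at h2 ⊢ <;> rw [e]
      · have hyq : q ≠ y := by
          rintro rfl
          linarith
        obtain ⟨g2, g3⟩ := S.ht_gap hij (S.pos_subset (hBP hy.1)) (S.pos_subset (hBP hq.1))
          (by rw [real_inner_comm]; exact hperp y hy.1)
          (by rw [real_inner_comm]; exact hperp q hq.1) (hO.2 q hq.1 y hy.1 hyq) e' e
        obtain ⟨m, hm, -⟩ := S.ht_pos (hBP hq.1)
        obtain ⟨l, hl, -⟩ := S.ht_pos (hBP hy.1)
        rw [hm, hl] at h2 g2 g3 ⊢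
        norm_cast at h2 g2 g3 ⊢
        lia
      · obtain ⟨m, hm, -⟩ := S.ht_pos (hBP hq.1)
        obtain ⟨l, hl, -⟩ := S.ht_pos (hBP hy.1)
        rw [hm, hl] at h2 ⊢
        norm_cast at h2 ⊢
        lia
  -- If no element of `B` is moved by `r j`, then `r j · B = B` and neither premise holds.
  · rw [Set.not_nonempty_iff_eq_empty] at hne
    rw [hne] at k1 k2
    have hBC : B = S.rAct j B := Set.Subset.antisymm (Set.sdiff_eq_empty.1 k1)
      (Set.sdiff_eq_empty.1 (by simpa using k2))
    exact ⟨fun h => absurd hBC.symm h.1, fun h => absurd hBC h.1⟩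
end
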